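/- arXiv:2305.04305 — 2 statements merged into one kernel-verified Lean document; each statement's English description precedes it below -/
import Mathlib

section
/- In the online Ramsey game with targets red C₄ and blue P₆, consider the position in which the five edges v₁v₂, v₂v₃, v₃v₄, v₄v₅, v₅v₆ of a path on six distinct vertices have been colored red, red, blue, red, red respectively (case R3). From this position Builder can force a red copy of C₄ or a blue copy of P₆ within at most 6 additional rounds, so within at most 11 rounds in total. -/
open SimpleGraph

/-- The set `S` of edges of the infinite complete graph on `ℕ` contains a copy of
the graph `G`: there is an injective map of the vertices of `G` into `ℕ` sending
every edge of `G` into `S`. -/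
def HasCopy {V : Type*} (G : SimpleGraph V) (S : Set (Sym2 ℕ)) : Prop :=
  ∃ f : V → ℕ, Function.Injective f ∧ ∀ a b, G.Adj a b → s(f a, f b) ∈ S

/-- `BuilderWinsIn G H R B r` means: in the online Ramsey game with targets a red copy
of `G` and a blue copy of `H`, from the position in which the edges in `R` have been
colored red and the edges in `B` have been colored blue, Builder has a strategy that
guarantees, against every Painter strategy, that within at most `r` further rounds the
colored edges contain a red copy of `G` or a blue copy of `H`.  (In each round Builder
chooses a previously unchosen non-loop edge of the infinite complete graph on `ℕ`, and
Painter immediately colors it red or blue; so Builder wins within `r + 1` rounds iff he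
has already won, or he can choose an edge such that whichever color Painter gives it,
he can win within `r` further rounds.) -/
def BuilderWinsIn {V W : Type*} (G : SimpleGraph V) (H : SimpleGraph W) :
    Set (Sym2 ℕ) → Set (Sym2 ℕ) → ℕ → Prop
  | R, B, 0 => HasCopy G R ∨ HasCopy H B
  | R, B, (r + 1) => HasCopy G R ∨ HasCopy H B ∨
      ∃ e : Sym2 ℕ, ¬ e.IsDiag ∧ e ∉ R ∧ e ∉ B ∧
        BuilderWinsIn G H (insert e R) B r ∧ BuilderWinsIn G H R (insert e B) r

/-- The online size Ramsey number `ř(G, H)`: the least `t` such that, starting from the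
empty position, Builder can force a red copy of `G` or a blue copy of `H` within at
most `t` rounds. -/
noncomputable def onlineRamsey {V W : Type*} (G : SimpleGraph V) (H : SimpleGraph W) : ℕ :=
  sInf {t | BuilderWinsIn G H ∅ ∅ t}

/-- Builder strategy trees on six vertices: leaves carry a red four-cycle or a blue
six-vertex path; an inner node carries the edge to play and the continuations for the
answers red and blue. -/
inductive Strat
  | red (a b c d : Fin 6)
  | blue (a b c d e f : Fin 6)
  | move (a b : Fin 6) (s t : Strat)

/-- Membership of an unordered pair in a list of pairs. -/
def memE (a b : Fin 6) (L : List (Fin 6 × Fin 6)) : Bool :=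
  L.any fun p => (p.1 == a && p.2 == b) || (p.1 == b && p.2 == a)

/-- Checks that a strategy tree wins from the position `(R, B)` within `r` rounds. -/
def Strat.check : Strat → List (Fin 6 × Fin 6) → List (Fin 6 × Fin 6) → ℕ → Bool
  | .red a b c d, R, _, _ => decide [a, b, c, d].Nodup &&
      (memE a b R && memE b c R && memE c d R && memE d a R)
  | .blue a b c d e f, _, B, _ => decide [a, b, c, d, e, f].Nodup &&
      (memE a b B && memE b c B && memE c d B && memE d e B && memE e f B)
  | .move _ _ _ _, _, _, 0 => false
  | .move a b s t, R, B, r + 1 => (a != b) && !memE a b R && !memE a b B &&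
      s.check ((a, b) :: R) B r && t.check R ((a, b) :: B) r

/-- The set of edges of `ℕ` described by a list of pairs. -/
def edges (v : Fin 6 → ℕ) (L : List (Fin 6 × Fin 6)) : Set (Sym2 ℕ) :=
  {e | ∃ p ∈ L, e = s(v p.1, v p.2)}

theorem mem_edges (v : Fin 6 → ℕ) (hv : Function.Injective v) (a b : Fin 6)
    (L : List (Fin 6 × Fin 6)) : s(v a, v b) ∈ edges v L ↔ memE a b L = true := by
  simp only [edges, memE, Set.mem_ofPred_eq, List.any_eq_true, Sym2.eq_iff, hv.eq_iff,
    Bool.or_eq_true, Bool.and_eq_true, beq_iff_eq]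
  refine exists_congr fun p => and_congr_right fun _ => ?_
  constructor <;> rintro (⟨h, k⟩ | ⟨h, k⟩) <;> simp [h, k]

theorem edges_cons (v : Fin 6 → ℕ) (a b : Fin 6) (L : List (Fin 6 × Fin 6)) :
    edges v ((a, b) :: L) = insert s(v a, v b) (edges v L) := by
  ext e
  simp [edges]

theorem wins_of_red {V W : Type*} {G : SimpleGraph V} {H : SimpleGraph W}
    {R B : Set (Sym2 ℕ)} (r : ℕ) (h : HasCopy G R) : BuilderWinsIn G H R B r := by
  cases r <;> exact Or.inl h

theorem wins_of_blue {V W : Type*} {G : SimpleGraph V} {H : SimpleGraph W}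
    {R B : Set (Sym2 ℕ)} (r : ℕ) (h : HasCopy H B) : BuilderWinsIn G H R B r := by
  cases r
  · exact Or.inr h
  · exact Or.inr (Or.inl h)

theorem cycle_adj : ∀ i j : Fin 4, (cycleGraph 4).Adj i j → j = i + 1 ∨ i = j + 1 := by
  decide

theorem path_adj (i j : Fin 6) (h : (pathGraph 6).Adj i j) :
    j.val = i.val + 1 ∨ i.val = j.val + 1 := by
  rw [pathGraph_adj] at h
  omega

theorem Strat.sound (v : Fin 6 → ℕ) (hv : Function.Injective v) (s : Strat) :
    ∀ R B r, s.check R B r = true →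
      BuilderWinsIn (cycleGraph 4) (pathGraph 6) (edges v R) (edges v B) r := by
  induction s with
  | red a b c d =>
    intro R B r h
    simp only [Strat.check, Bool.and_eq_true, decide_eq_true_eq, ← mem_edges v hv] at h
    obtain ⟨hn, ⟨⟨h1, h2⟩, h3⟩, h4⟩ := h
    apply wins_of_red
    refine ⟨v ∘ [a, b, c, d].get, hv.comp (List.nodup_iff_injective_get.1 hn), ?_⟩
    let g : Fin 4 → ℕ := v ∘ [a, b, c, d].get
    have key : ∀ i : Fin 4, s(g i, g (i + 1)) ∈ edges v R := by
      intro i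
      obtain ⟨i, hi⟩ := i
      interval_cases i
      · exact h1
      · exact h2
      · exact h3
      · exact h4
    intro i j hij
    rcases cycle_adj i j hij with rfl | rfl
    · exact key i
    · rw [Sym2.eq_swap]
      exact key j
  | blue a b c d e f =>
    intro R B r h
    simp only [Strat.check, Bool.and_eq_true, decide_eq_true_eq, ← mem_edges v hv] at h
    obtain ⟨hn, ⟨⟨⟨h1, h2⟩, h3⟩, h4⟩, h5⟩ := h
    apply wins_of_blue
    refine ⟨v ∘ [a, b, c, d, e, f].get, hv.comp (List.nodup_iff_injective_get.1 hn), ?_⟩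
    have key : ∀ i j : Fin 6, j.val = i.val + 1 →
        s((v ∘ [a, b, c, d, e, f].get) i, (v ∘ [a, b, c, d, e, f].get) j) ∈ edges v B := by
      intro i j hij
      obtain ⟨i, hi⟩ := i
      obtain ⟨j, hj⟩ := j
      simp only at hij
      subst hij
      have : i < 5 := by omega
      interval_cases i
      · exact h1
      · exact h2
      · exact h3
      · exact h4
      · exact h5
    intro i j hij
    rcases path_adj i j hij with h | h
    · exact key i j h
    · rw [Sym2.eq_swap]
      exact key j i h
  | move a b s t ihs iht =>
    intro R B r h
    cases r with
    | zero => simp [Strat.check] at h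
    | succ r =>
      simp only [Strat.check, Bool.and_eq_true, bne_iff_ne, Bool.not_eq_true',
        ← Bool.not_eq_true, ← mem_edges v hv] at h
      obtain ⟨⟨⟨⟨h1, h2⟩, h3⟩, h4⟩, h5⟩ := h
      refine Or.inr (Or.inr ⟨s(v a, v b), ?_, h2, h3, ?_, ?_⟩)
      · simpa [hv.eq_iff] using h1
      · rw [← edges_cons]
        exact ihs _ _ _ h4
      · rw [← edges_cons]
        exact iht _ _ _ h5

/-- Builder's winning strategy in case `R3`. -/
def stratR3 : Strat :=  (.move 0 2
    (.move 2 4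
      (.move 0 3 (.red 0 2 4 3)
        (.move 0 4 (.red 0 1 2 4)
          (.move 1 4 (.red 0 1 4 2)
            (.move 1 5 (.red 1 2 4 5) (.blue 2 3 0 4 1 5)))))
      (.move 0 5
        (.move 0 3 (.red 0 3 4 5)
          (.move 1 4 (.red 0 1 4 5)
            (.move 1 5 (.red 0 2 1 5) (.blue 0 3 2 4 1 5))))
        (.move 1 3
          (.move 0 3 (.red 0 2 1 3)
            (.move 1 5 (.red 1 3 4 5) (.blue 1 5 0 3 2 4)))
          (.move 0 4
            (.move 1 5 (.red 0 1 5 4) (.blue 0 5 1 3 2 4)) (.blue 1 3 2 4 0 5)))))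
    (.move 1 3
      (.move 0 4 (.red 0 1 3 4)
        (.move 1 4
          (.move 1 5 (.red 1 3 4 5)
            (.move 3 5 (.red 1 3 5 4) (.blue 1 5 3 2 0 4)))
          (.move 0 3
            (.move 1 5 (.red 1 3 4 5) (.blue 3 2 0 4 1 5))
            (.move 1 5 (.red 1 3 4 5) (.blue 2 3 0 4 1 5)))))
      (.move 0 4
        (.move 0 3
          (.move 1 4 (.red 0 1 4 3)
            (.move 0 5 (.red 0 3 4 5) (.blue 4 1 3 2 0 5)))
          (.move 2 4 (.red 0 1 2 4)
            (.move 1 5 (.red 0 1 5 4) (.blue 4 2 0 3 1 5))))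
        (.move 1 4
          (.move 2 4
            (.move 1 5 (.red 1 2 4 5) (.blue 4 0 2 3 1 5))
            (.move 0 5 (.red 0 1 4 5) (.blue 1 3 2 4 0 5)))
          (.move 0 5
            (.move 2 5 (.red 0 1 2 5) (.blue 0 4 1 3 2 5)) (.blue 2 3 1 4 0 5))))))

/-- Case `R3`: in the online Ramsey game with targets red `C₄` and blue `P₆`,
from the position in which the five edges `v₁v₂, v₂v₃, v₃v₄, v₄v₅, v₅v₆` of a path on
six distinct vertices have been colored red, red, blue, red, red respectively,
Builder can force a red copy of `C₄` or a blue copy of `P₆` within at most 6 additional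
rounds (so within at most 11 rounds in total). -/
theorem builder_wins_case_R3 (v : Fin 6 → ℕ) (hv : Function.Injective v) :
    BuilderWinsIn (cycleGraph 4) (pathGraph 6)
      {s(v 0, v 1), s(v 1, v 2), s(v 3, v 4), s(v 4, v 5)}
      {s(v 2, v 3)} 6 := by
  have h := stratR3.sound v hv [(0, 1), (1, 2), (3, 4), (4, 5)] [(2, 3)] 6 (by rfl)
  have e0 : edges v [] = ∅ := by
    ext e
    simp [edges]
  simpa only [edges_cons, e0, insert_empty_eq] using h
end

section
/- In the online Ramsey game with targets red C₄ and blue P₆, consider the position in which the five edges v₁v₂, v₂v₃, v₃v₄, v₄v₅, v₅v₆ of a path on six distinct vertices have been colored red, red, red, blue, blue respectively (case R4). From this position Builder can force a red copy of C₄ or a blue copy of P₆ within at most 6 additional rounds, so within at most 11 rounds in total. -/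
open SimpleGraph

/-- A certificate for a Builder strategy on seven vertices. -/
inductive Strat_s15 where
  | redC (a b c d : Fin 7)
  | blueP (a b c d e f : Fin 7)
  | ask (a b : Fin 7) (whenRed whenBlue : Strat_s15)

/-- Validity of a strategy from a position, within a number of rounds. -/
def Strat_s15.ok : Strat_s15 → List (Sym2 (Fin 7)) → List (Sym2 (Fin 7)) → ℕ → Bool
  | .redC a b c d, R, _, _ => decide ([a, b, c, d].Nodup) &&
      decide (s(a, b) ∈ R ∧ s(b, c) ∈ R ∧ s(c, d) ∈ R ∧ s(d, a) ∈ R)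
  | .blueP a b c d e f, _, B, _ => decide ([a, b, c, d, e, f].Nodup) &&
      decide (s(a, b) ∈ B ∧ s(b, c) ∈ B ∧ s(c, d) ∈ B ∧ s(d, e) ∈ B ∧ s(e, f) ∈ B)
  | .ask _ _ _ _, _, _, 0 => false
  | .ask a b x y, R, B, k + 1 => decide (a ≠ b ∧ s(a, b) ∉ R ∧ s(a, b) ∉ B) &&
      x.ok (s(a, b) :: R) B k && y.ok R (s(a, b) :: B) k

/-- The set of edges on `ℕ` given by a list of abstract edges. -/
def edgeImg (w : Fin 7 → ℕ) (L : List (Sym2 (Fin 7))) : Set (Sym2 ℕ) :=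
  Sym2.map w '' {e | e ∈ L}

theorem edgeImg_cons (w : Fin 7 → ℕ) (a b : Fin 7) (L : List (Sym2 (Fin 7))) :
    edgeImg w (s(a, b) :: L) = insert s(w a, w b) (edgeImg w L) := by
  ext e
  simp [edgeImg, eq_comm]

theorem mem_edgeImg (w : Fin 7 → ℕ) (hw : Function.Injective w) (a b : Fin 7)
    (L : List (Sym2 (Fin 7))) : s(w a, w b) ∈ edgeImg w L ↔ s(a, b) ∈ L := by
  have := (Sym2.map.injective hw).mem_set_image (s := {e | e ∈ L}) (a := s(a, b))
  simpa [edgeImg] using this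

theorem wins_of_copy {V W : Type*} (G : SimpleGraph V) (H : SimpleGraph W)
    (R B : Set (Sym2 ℕ)) (k : ℕ) (h : HasCopy G R ∨ HasCopy H B) :
    BuilderWinsIn G H R B k := by
  cases k with
  | zero => exact h
  | succ k =>
    rcases h with h | h
    · exact Or.inl h
    · exact Or.inr (Or.inl h)

theorem Strat_s15.sound (w : Fin 7 → ℕ) (hw : Function.Injective w) (t : Strat_s15) :
    ∀ (R B : List (Sym2 (Fin 7))) (k : ℕ), t.ok R B k = true →
      BuilderWinsIn (cycleGraph 4) (pathGraph 6) (edgeImg w R) (edgeImg w B) k := by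
  induction t with
  | redC a b c d =>
    intro R B k h
    simp only [Strat_s15.ok, Bool.and_eq_true, decide_eq_true_eq] at h
    obtain ⟨hn, h1, h2, h3, h4⟩ := h
    refine wins_of_copy _ _ _ _ _ (Or.inl ⟨fun i => w ([a, b, c, d].get i),
      hw.comp (List.nodup_iff_injective_get.mp hn), ?_⟩)
    intro i j hij
    rw [mem_edgeImg w hw]
    have key : ∀ i j : Fin 4, (cycleGraph 4).Adj i j → j = i + 1 ∨ i = j + 1 := by
      decide
    rcases key i j hij with rfl | rfl
    · fin_cases i <;> simpa
    · rw [Sym2.eq_swap]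
      fin_cases j <;> simpa
  | blueP a b c d e f =>
    intro R B k h
    simp only [Strat_s15.ok, Bool.and_eq_true, decide_eq_true_eq] at h
    obtain ⟨hn, h1, h2, h3, h4, h5⟩ := h
    refine wins_of_copy _ _ _ _ _ (Or.inr ⟨fun i => w ([a, b, c, d, e, f].get i),
      hw.comp (List.nodup_iff_injective_get.mp hn), ?_⟩)
    have key : ∀ i j : Fin 6, i.val + 1 = j.val →
        s([a, b, c, d, e, f].get i, [a, b, c, d, e, f].get j) ∈ B := by
      intro i j hij
      fin_cases i <;> fin_cases j <;> first | (exfalso; simp at hij; done) | simpa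
    intro i j hij
    rw [mem_edgeImg w hw]
    rcases pathGraph_adj.mp hij with hij | hij
    · exact key i j hij
    · rw [Sym2.eq_swap]
      exact key j i hij
  | ask a b x y ihx ihy =>
    intro R B k h
    cases k with
    | zero => simp [Strat_s15.ok] at h
    | succ k =>
      simp only [Strat_s15.ok, Bool.and_eq_true, decide_eq_true_eq] at h
      obtain ⟨⟨⟨hab, hR, hB⟩, hx⟩, hy⟩ := h
      refine Or.inr (Or.inr ⟨s(w a, w b), ?_, ?_, ?_, ?_, ?_⟩)
      · simpa using fun hh => hab (hw hh)
      · rwa [mem_edgeImg w hw]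
      · rwa [mem_edgeImg w hw]
      · rw [← edgeImg_cons]
        exact ihx _ _ _ hx
      · rw [← edgeImg_cons]
        exact ihy _ _ _ hy

/-- Builder's strategy in case `R4`; vertex `6` is a fresh vertex. -/
def stratR4 : Strat_s15 :=
    (.ask 0 2
    (.ask 0 3
    (.redC 0 1 2 3) (.ask 1 3
    (.redC 0 1 3 2) (.ask 0 6
    (.ask 1 6
    (.redC 0 2 1 6) (.ask 2 6
    (.redC 0 1 2 6) (.blueP 2 6 1 3 4 5))) (.ask 0 5
    (.ask 1 5
    (.redC 0 2 1 5) (.blueP 1 5 4 3 0 6)) (.blueP 1 3 4 5 0 6))))) (.ask 0 3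
    (.redC 0 1 2 3) (.ask 1 3
    (.ask 1 4
    (.ask 3 6
    (.ask 2 6
    (.redC 1 2 6 3) (.blueP 5 4 3 0 2 6)) (.ask 2 4
    (.redC 1 3 2 4) (.blueP 5 4 2 0 3 6))) (.ask 1 5
    (.ask 2 5
    (.redC 1 3 2 5) (.blueP 1 4 3 0 2 5)) (.blueP 1 5 4 3 0 2))) (.ask 0 4
    (.ask 1 4
    (.ask 2 4
    (.redC 0 1 2 4) (.blueP 1 3 0 2 4 5)) (.blueP 2 0 3 1 4 5)) (.ask 0 5
    (.ask 2 5
    (.redC 0 1 2 5) (.blueP 0 2 5 4 3 1)) (.blueP 1 3 4 5 0 2))))))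

theorem stratR4_ok :
    stratR4.ok [s(0, 1), s(1, 2), s(2, 3)] [s(3, 4), s(4, 5)] 6 = true := by
  decide

/-- Case `R4`: in the online Ramsey game with targets red `C₄` and blue `P₆`,
from the position in which the five edges `v₁v₂, v₂v₃, v₃v₄, v₄v₅, v₅v₆` of a path on
six distinct vertices have been colored red, red, red, blue, blue respectively,
Builder can force a red copy of `C₄` or a blue copy of `P₆` within at most 6 additional
rounds (so within at most 11 rounds in total). -/
theorem builder_wins_case_R4 (v : Fin 6 → ℕ) (hv : Function.Injective v) :
    BuilderWinsIn (cycleGraph 4) (pathGraph 6)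
      {s(v 0, v 1), s(v 1, v 2), s(v 2, v 3)}
      {s(v 3, v 4), s(v 4, v 5)} 6 := by
  obtain ⟨x, hx⟩ := (Set.finite_range v).exists_notMem
  have hw : Function.Injective (Fin.snoc v x : Fin 7 → ℕ) :=
    Fin.snoc_injective_iff.mpr ⟨hv, hx⟩
  have h := stratR4.sound _ hw _ _ _ stratR4_ok
  have e (i : Fin 6) : (Fin.snoc v x : Fin 7 → ℕ) i.castSucc = v i :=
    Fin.snoc_castSucc (α := fun _ => ℕ) x v i
  have e0 := e 0
  have e1 := e 1
  have e2 := e 2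
  have e3 := e 3
  have e4 := e 4
  have e5 := e 5
  simp only [Fin.reduceCastSucc] at e0 e1 e2 e3 e4 e5
  have nil : edgeImg (Fin.snoc v x : Fin 7 → ℕ) [] = ∅ := by simp [edgeImg]
  simpa only [edgeImg_cons, nil, e0, e1, e2, e3, e4, e5, insert_empty_eq] using h
end
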